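/- Let n ≥ 3 be an integer, φ₀ > 0, a = φ₀^{-2(n-1)}, and let φ : I → ℝ be a smooth positive function on an open interval I containing 0 satisfying φ''(s) = (n-1)(1+φ'(s)²)/φ(s), φ(0) = φ₀, φ'(0) = 0. Define the radial Laplacian of a twice-differentiable function f : I → ℝ by Δf(s) = (1+φ'(s)²)^{-1/2}·φ(s)^{1-n}·d/ds[(1+φ'(s)²)^{-1/2}·φ(s)^{n-1}·f'(s)], and set ψ(s) = (n(n-1))^{1/2}·φ₀^{n-1}·φ(s)^{-n}. Then for all s ∈ I: ψ(s)·Δψ(s) + ψ(s)⁴ = (2/n)·(1+φ'(s)²)^{-1}·ψ'(s)². -/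

import Mathlib

/-!
The catenoid ODE makes the flux weight `(1+φ'²)^(-1/2)·φ^(n-1)` inside the radial Laplacian a
constant `c`. Hence the Laplacian collapses to `Δf = f''/(1+φ'²)`, and the squared norm
`|A|² = n(n-1)·c²·φ^(-2n)` takes the form `|A|² = n(n-1)/((1+φ'²)φ²)`. Since `|A|` is a constant
multiple of `φ^(-n)`, the ODE gives `|A|'' = n(2φ'²-(n-1))/φ²·|A|`; in `|A|Δ|A| + |A|⁴` the terms
with `n-1` cancel, and what is left is `2n·φ'²/((1+φ'²)φ²)·|A|²`.
-/

/-- The Laplace–Beltrami operator of the catenoid metric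
`g = (1+φ'²)ds² + φ²·g_{S^{n-1}}` acting on rotationally symmetric functions `f = f(s)`:
`Δf = (1+φ'²)^(-1/2)·φ^(1-n)·((1+φ'²)^(-1/2)·φ^(n-1)·f')'`. -/
noncomputable def radialLaplacian (n : ℕ) (φ : ℝ → ℝ) (f : ℝ → ℝ) : ℝ → ℝ :=
  fun s =>
    (1 + (deriv φ s) ^ 2) ^ (-(1 / 2 : ℝ)) * (φ s) ^ ((1 : ℤ) - n) *
      deriv (fun t =>
        (1 + (deriv φ t) ^ 2) ^ (-(1 / 2 : ℝ)) * (φ t) ^ ((n : ℤ) - 1) * deriv f t) s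

/-- The weight of the flux `weight · f'` whose derivative is the radial Laplacian of `f`. On the
catenoid it is the first integral of the profile equation, equal to `φ₀^(n-1)` at a neck of
radius `φ₀`. -/
noncomputable def radialFluxWeight (n : ℕ) (φ : ℝ → ℝ) (s : ℝ) : ℝ :=
  (1 + deriv φ s ^ 2) ^ (-(1 / 2 : ℝ)) * φ s ^ ((n : ℤ) - 1)

/-- The norm `|A|` of the second fundamental form of the catenoid with profile `φ`, where `c` is the
constant value of `radialFluxWeight n φ`. -/
noncomputable def catenoidCurvatureNorm (n : ℕ) (c : ℝ) (φ : ℝ → ℝ) (s : ℝ) : ℝ :=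
  √((n : ℝ) * ((n : ℝ) - 1)) * c * φ s ^ (-(n : ℤ))

lemma rpow_neg_half_sq {x : ℝ} (hx : 0 ≤ x) : (x ^ (-(1 / 2 : ℝ))) ^ 2 = x⁻¹ := by
  rw [Real.rpow_neg hx, ← Real.sqrt_eq_rpow, inv_pow, Real.sq_sqrt hx]

section Calculus

variable {𝕜 : Type*} [NontriviallyNormedField 𝕜]

lemma hasDerivAt_deriv_of_contDiffAt_two {E : Type*} [NormedAddCommGroup E] [NormedSpace 𝕜 E]
    {f : 𝕜 → E} {x : 𝕜} (hf : ContDiffAt 𝕜 2 f x) : HasDerivAt (deriv f) (deriv (deriv f) x) x :=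
  ((hf.derivWithin (m := 1) (by norm_num)).differentiableAt one_ne_zero).hasDerivAt

variable {φ : 𝕜 → 𝕜} {s : 𝕜}

lemma hasDerivAt_zpow_comp (k : ℤ) (hφ : DifferentiableAt 𝕜 φ s) (hφs : φ s ≠ 0) :
    HasDerivAt (fun t => φ t ^ k) (k * (deriv φ s / φ s) * φ s ^ k) s := by
  refine ((hasDerivAt_zpow k (φ s) (Or.inl hφs)).comp s hφ.hasDerivAt).congr_deriv ?_
  rw [zpow_sub_one₀ hφs]
  ring

lemma deriv_deriv_zpow_comp (k : ℤ) (hφ : ContDiffAt 𝕜 2 φ s) (hφs : φ s ≠ 0) :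
    deriv (deriv fun t => φ t ^ k) s =
      k * ((k - 1) * deriv φ s ^ 2 + φ s * deriv (deriv φ) s) / φ s ^ 2 * φ s ^ k := by
  have hdφ := hφ.differentiableAt two_ne_zero
  have hderiv : deriv (fun t => φ t ^ k) =ᶠ[nhds s] fun t => k * (deriv φ t / φ t) * φ t ^ k := by
    filter_upwards [hφ.eventually (by simp), hφ.continuousAt.eventually_ne hφs] with t ht hφt
    exact (hasDerivAt_zpow_comp k (ht.differentiableAt two_ne_zero) hφt).deriv
  have hderiv₂ := (((hasDerivAt_deriv_of_contDiffAt_two hφ).div hdφ.hasDerivAt hφs).const_mul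
    (k : 𝕜)).mul (hasDerivAt_zpow_comp k hdφ hφs)
  rw [hderiv.deriv_eq]
  refine hderiv₂.deriv.trans ?_
  simp only [Pi.div_apply]
  field_simp
  ring

end Calculus

section FluxWeight

variable {n : ℕ} {φ : ℝ → ℝ} {s : ℝ}

lemma radialFluxWeight_sq :
    radialFluxWeight n φ s ^ 2 = (1 + deriv φ s ^ 2)⁻¹ * (φ s ^ ((n : ℤ) - 1)) ^ 2 := by
  rw [radialFluxWeight, mul_pow, rpow_neg_half_sq (by positivity)]

lemma radialFluxWeight_of_deriv_eq_zero (hn : n ≠ 0) (hcrit : deriv φ s = 0) :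
    radialFluxWeight n φ s = φ s ^ (n - 1) := by
  rw [← zpow_natCast, Nat.cast_pred (Nat.pos_of_ne_zero hn)]
  simp [radialFluxWeight, hcrit]

lemma hasDerivAt_radialFluxWeight (hφ : ContDiffAt ℝ 2 φ s) (hφs : φ s ≠ 0) :
    HasDerivAt (radialFluxWeight n φ)
      (radialFluxWeight n φ s * deriv φ s *
        (((n : ℝ) - 1) / φ s - deriv (deriv φ) s / (1 + deriv φ s ^ 2))) s := by
  have hv : 0 < 1 + deriv φ s ^ 2 := by positivity
  have hspeed := (((hasDerivAt_deriv_of_contDiffAt_two hφ).pow 2).const_add 1).rpow_const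
    (p := -(1 / 2)) (Or.inl hv.ne')
  have hpower := hasDerivAt_zpow_comp ((n : ℤ) - 1) (hφ.differentiableAt two_ne_zero) hφs
  refine (hspeed.mul hpower).congr_deriv ?_
  simp only [radialFluxWeight, Pi.pow_apply]
  rw [Real.rpow_sub_one hv.ne']
  push_cast
  field_simp
  ring

lemma radialFluxWeight_eqOn_const {I : Set ℝ} (hIopen : IsOpen I) (hIconn : IsPreconnected I)
    (hφ : ContDiffOn ℝ 2 φ I) (hne : ∀ s ∈ I, φ s ≠ 0)
    (hode : ∀ s ∈ I, deriv (deriv φ) s = ((n : ℝ) - 1) * (1 + deriv φ s ^ 2) / φ s)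
    {s₀ : ℝ} (hs₀ : s₀ ∈ I) :
    I.EqOn (radialFluxWeight n φ) fun _ => radialFluxWeight n φ s₀ := by
  have hderiv : ∀ s ∈ I, HasDerivAt (radialFluxWeight n φ) 0 s := by
    intro s hs
    have hv : 1 + deriv φ s ^ 2 ≠ 0 := by positivity
    refine (hasDerivAt_radialFluxWeight (hφ.contDiffAt (hIopen.mem_nhds hs))
      (hne s hs)).congr_deriv ?_
    rw [hode s hs, div_right_comm, mul_div_cancel_right₀ _ hv, sub_self, mul_zero]
  exact fun s hs => hIopen.is_const_of_deriv_eq_zero hIconn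
    (fun t ht => (hderiv t ht).differentiableAt.differentiableWithinAt)
    (fun t ht => (hderiv t ht).deriv) hs hs₀

lemma radialLaplacian_of_radialFluxWeight_const {c : ℝ} (hφs : φ s ≠ 0)
    (hc : radialFluxWeight n φ =ᶠ[nhds s] fun _ => c) (f : ℝ → ℝ) :
    radialLaplacian n φ f s = (1 + deriv φ s ^ 2)⁻¹ * deriv (deriv f) s := by
  have hflux : (fun t => radialFluxWeight n φ t * deriv f t) =ᶠ[nhds s] fun t => c * deriv f t :=
    hc.mul .rfl
  calc radialLaplacian n φ f s
      = (1 + deriv φ s ^ 2) ^ (-(1 / 2 : ℝ)) * φ s ^ (1 - (n : ℤ)) *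
          deriv (fun t => radialFluxWeight n φ t * deriv f t) s := rfl
    _ = (1 + deriv φ s ^ 2) ^ (-(1 / 2 : ℝ)) * φ s ^ (1 - (n : ℤ)) *
          (radialFluxWeight n φ s * deriv (deriv f) s) := by
        rw [hflux.deriv_eq, deriv_const_mul_field, hc.eq_of_nhds]
    _ = ((1 + deriv φ s ^ 2) ^ (-(1 / 2 : ℝ))) ^ 2 *
          (φ s ^ (1 - (n : ℤ)) * φ s ^ ((n : ℤ) - 1)) * deriv (deriv f) s := by
        rw [radialFluxWeight]
        ring
    _ = (1 + deriv φ s ^ 2)⁻¹ * deriv (deriv f) s := by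
        rw [rpow_neg_half_sq (by positivity), ← zpow_add₀ hφs]
        simp

end FluxWeight

section CurvatureNorm

variable {n : ℕ} {φ : ℝ → ℝ} {s : ℝ}

lemma catenoidCurvatureNorm_sq {c : ℝ} (hφs : φ s ≠ 0) (hc : radialFluxWeight n φ s = c) :
    catenoidCurvatureNorm n c φ s ^ 2 =
      n * ((n : ℝ) - 1) / ((1 + deriv φ s ^ 2) * φ s ^ 2) := by
  have hn : 0 ≤ (n : ℝ) * ((n : ℝ) - 1) := by
    rcases n.eq_zero_or_pos with rfl | hpos
    · simp
    · exact mul_nonneg n.cast_nonneg (sub_nonneg.2 (Nat.one_le_cast.2 hpos))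
  have hpower : φ s ^ ((n : ℤ) - 1) * φ s ^ (-(n : ℤ)) = (φ s)⁻¹ := by
    rw [← zpow_add₀ hφs, ← zpow_neg_one]
    congr 1
    ring
  calc catenoidCurvatureNorm n c φ s ^ 2
      = n * ((n : ℝ) - 1) * (1 + deriv φ s ^ 2)⁻¹ *
          (φ s ^ ((n : ℤ) - 1) * φ s ^ (-(n : ℤ))) ^ 2 := by
        rw [catenoidCurvatureNorm, mul_pow, mul_pow, Real.sq_sqrt hn, ← hc, radialFluxWeight_sq]
        ring
    _ = n * ((n : ℝ) - 1) / ((1 + deriv φ s ^ 2) * φ s ^ 2) := by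
        rw [hpower]
        field_simp

lemma deriv_catenoidCurvatureNorm (c : ℝ) (hφ : DifferentiableAt ℝ φ s) (hφs : φ s ≠ 0) :
    deriv (catenoidCurvatureNorm n c φ) s =
      -n * (deriv φ s / φ s) * catenoidCurvatureNorm n c φ s := by
  unfold catenoidCurvatureNorm
  rw [deriv_const_mul_field, (hasDerivAt_zpow_comp (-(n : ℤ)) hφ hφs).deriv]
  push_cast
  ring

lemma deriv_deriv_catenoidCurvatureNorm (c : ℝ) (hφ : ContDiffAt ℝ 2 φ s) (hφs : φ s ≠ 0)
    (hode : deriv (deriv φ) s = ((n : ℝ) - 1) * (1 + deriv φ s ^ 2) / φ s) :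
    deriv (deriv (catenoidCurvatureNorm n c φ)) s =
      n * (2 * deriv φ s ^ 2 - ((n : ℝ) - 1)) / φ s ^ 2 * catenoidCurvatureNorm n c φ s := by
  unfold catenoidCurvatureNorm
  rw [deriv_const_mul_field', deriv_const_mul_field, deriv_deriv_zpow_comp (-(n : ℤ)) hφ hφs, hode,
    mul_div_cancel₀ _ hφs]
  push_cast
  ring

end CurvatureNorm

theorem catenoid_simons_equality_general {n : ℕ} (hn : n ≠ 0)
    {I : Set ℝ} (hIopen : IsOpen I) (hIconn : IsPreconnected I)
    {φ : ℝ → ℝ} (hφ : ContDiffOn ℝ 2 φ I) (hne : ∀ s ∈ I, φ s ≠ 0)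
    (hode : ∀ s ∈ I, deriv (deriv φ) s = ((n : ℝ) - 1) * (1 + deriv φ s ^ 2) / φ s)
    {s₀ c : ℝ} (hs₀ : s₀ ∈ I) (hc : radialFluxWeight n φ s₀ = c)
    {ψ : ℝ → ℝ} (hψ : ψ = catenoidCurvatureNorm n c φ) :
    ∀ s ∈ I,
      ψ s * radialLaplacian n φ ψ s + ψ s ^ 4 =
        2 / n * (1 + deriv φ s ^ 2)⁻¹ * deriv ψ s ^ 2 := by
  intro s hs
  have hconst : I.EqOn (radialFluxWeight n φ) fun _ => c :=
    hc ▸ radialFluxWeight_eqOn_const hIopen hIconn hφ hne hode hs₀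
  have hφ_at : ContDiffAt ℝ 2 φ s := hφ.contDiffAt (hIopen.mem_nhds hs)
  have hsq : ψ s ^ 2 = n * ((n : ℝ) - 1) / ((1 + deriv φ s ^ 2) * φ s ^ 2) :=
    hψ ▸ catenoidCurvatureNorm_sq (hne s hs) (hconst hs)
  have hderiv : deriv ψ s = -n * (deriv φ s / φ s) * ψ s :=
    hψ ▸ deriv_catenoidCurvatureNorm c (hφ_at.differentiableAt two_ne_zero) (hne s hs)
  have hderiv₂ : deriv (deriv ψ) s = n * (2 * deriv φ s ^ 2 - ((n : ℝ) - 1)) / φ s ^ 2 * ψ s :=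
    hψ ▸ deriv_deriv_catenoidCurvatureNorm c hφ_at (hne s hs) (hode s hs)
  have hlaplacian : radialLaplacian n φ ψ s = (1 + deriv φ s ^ 2)⁻¹ * deriv (deriv ψ) s :=
    radialLaplacian_of_radialFluxWeight_const (hne s hs)
      (hconst.eventuallyEq_of_mem (hIopen.mem_nhds hs)) ψ
  calc ψ s * radialLaplacian n φ ψ s + ψ s ^ 4
      = ψ s ^ 2 * (n * (2 * deriv φ s ^ 2 - ((n : ℝ) - 1)) / ((1 + deriv φ s ^ 2) * φ s ^ 2) +
          ψ s ^ 2) := by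
        rw [hlaplacian, hderiv₂]
        field_simp
    _ = ψ s ^ 2 * (2 * n * deriv φ s ^ 2 / ((1 + deriv φ s ^ 2) * φ s ^ 2)) := by
        rw [hsq]
        ring
    _ = 2 / n * (1 + deriv φ s ^ 2)⁻¹ * deriv ψ s ^ 2 := by
        rw [hderiv]
        field_simp

/-- **Simons' identity on the catenoid.**
Let `φ` be a smooth positive solution of the catenoid ODE on an open interval `I`
containing `0` with `φ 0 = φ₀ > 0`, `φ' 0 = 0`, and set
`ψ = (n(n-1))^(1/2)·φ₀^(n-1)·φ^(-n)` (the norm `|A|` of the second fundamental form).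
Then `ψ·Δψ + ψ⁴ = (2/n)·(1+φ'²)⁻¹·ψ'²` on `I`, i.e. Simons' inequality
`|A|Δ|A| + |A|⁴ ≥ (2/n)|∇|A||²` holds with equality. -/
theorem catenoid_simons_equality
    (n : ℕ) (hn : 3 ≤ n) (φ₀ : ℝ) (hφ₀ : 0 < φ₀)
    (a : ℝ) (ha : a = φ₀ ^ (-(2 * ((n : ℤ) - 1))))
    (I : Set ℝ) (hIopen : IsOpen I) (hIconv : Convex ℝ I) (h0I : (0 : ℝ) ∈ I)
    (φ : ℝ → ℝ)
    (hsmooth : ContDiffOn ℝ (⊤ : ℕ∞) φ I)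
    (hpos : ∀ s ∈ I, 0 < φ s)
    (hode : ∀ s ∈ I, deriv (deriv φ) s = ((n : ℝ) - 1) * (1 + (deriv φ s) ^ 2) / φ s)
    (hinit : φ 0 = φ₀) (hinit' : deriv φ 0 = 0)
    (ψ : ℝ → ℝ)
    (hψ : ψ = fun s => Real.sqrt ((n : ℝ) * ((n : ℝ) - 1)) * φ₀ ^ (n - 1) * (φ s) ^ (-(n : ℤ))) :
    ∀ s ∈ I,
      ψ s * radialLaplacian n φ ψ s + (ψ s) ^ 4
        = (2 / (n : ℝ)) * (1 + (deriv φ s) ^ 2)⁻¹ * (deriv ψ s) ^ 2 := by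
  have hn₀ : n ≠ 0 := by lia
  have hneck : radialFluxWeight n φ 0 = φ₀ ^ (n - 1) := by
    rw [radialFluxWeight_of_deriv_eq_zero hn₀ hinit', hinit]
  exact catenoid_simons_equality_general hn₀ hIopen hIconv.isPreconnected
    (hsmooth.of_le (WithTop.coe_le_coe.2 le_top)) (fun s hs => (hpos s hs).ne') hode h0I hneck hψ
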